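/- There are constants c, c' > 0 such that for all sufficiently large even N and every field K the following holds. If f ∈ K[x_1,…,x_N] is computed by an ROABP of width w ≥ 2 (with any variable order π), then for φ drawn from D, with probability at least 1 − 2^{−c'·√N·log N} one has rank(M_{f^φ}) ≤ w^{c·log N}·2^{N/2 − N^{1/5}/2}. -/

import Mathlib

open MvPolynomial

noncomputable section

/-- A multilinear polynomial: every exponent is at most 1. -/
def MLin {σ : Type*} {K : Type*} [CommSemiring K] (f : MvPolynomial σ K) : Prop :=
  ∀ d ∈ f.support, ∀ i, d i ≤ 1

/-- The partial derivative matrix of a multilinear polynomial over Y ∪ Z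
(Y = `inl`-variables, Z = `inr`-variables), rows and columns indexed by subsets. -/
def pdm {h : ℕ} {K : Type*} [CommSemiring K] (f : MvPolynomial (Fin h ⊕ Fin h) K) :
    Matrix (Finset (Fin h)) (Finset (Fin h)) K := fun S T =>
  f.coeff ((∑ i ∈ S, Finsupp.single (Sum.inl i) 1) + ∑ j ∈ T, Finsupp.single (Sum.inr j) 1)

/-- The field G = F(W), the field of rational functions over F in variables
`w_{i,k,j}`, `i,k,j ∈ ℕ`. -/
abbrev Gf (F : Type*) [Field F] : Type _ := FractionRing (MvPolynomial (ℕ × ℕ × ℕ) F)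

/-- The element w_{i,k,j} of G. -/
def wv (F : Type*) [Field F] (i k j : ℕ) : Gf F :=
  algebraMap (MvPolynomial (ℕ × ℕ × ℕ) F) (Gf F) (MvPolynomial.X (i, k, j))

/-- The Raz–Yehudayoff polynomials `g_{i,j}` (first argument is fuel; every
recursive call reduces `j - i` by at least 2, so fuel `N` suffices for `g_{1,N}`). -/
def RY (F : Type*) [Field F] : ℕ → ℕ → ℕ → MvPolynomial ℕ (Gf F)
  | 0, _, _ => 1
  | fuel + 1, i, j =>
      if j < i then 1
      else (1 + X i * X j) * RY F fuel (i + 1) (j - 1)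
        + ∑ k ∈ (Finset.Icc (i + 1) (j - 2)).filter (fun k => (k - i) % 2 = 1),
            C (wv F i k j) * RY F fuel i k * RY F fuel (k + 1) j

/-- The Raz–Yehudayoff polynomial `g = g_{1,N}`, in the variables `x_1, …, x_N`. -/
def razPoly (F : Type*) [Field F] (N : ℕ) : MvPolynomial ℕ (Gf F) := RY F N 1 N

/-- `|φ(S) ∩ Y|` for a partition function φ. -/
def yCount {h : ℕ} (φ : ℕ → Fin h ⊕ Fin h) (S : Finset ℕ) : ℕ :=
  (S.filter fun x => (φ x).isLeft = true).card

/-- `|φ(S) ∩ Z|` for a partition function φ. -/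
def zCount {h : ℕ} (φ : ℕ → Fin h ⊕ Fin h) (S : Finset ℕ) : ℕ :=
  (S.filter fun x => (φ x).isRight = true).card

/-- `S` is `k`-unbalanced with respect to the partition φ. -/
def kUnb {h : ℕ} (φ : ℕ → Fin h ⊕ Fin h) (k : ℕ) (S : Finset ℕ) : Prop :=
  (k : ℤ) ≤ |(yCount φ S : ℤ) - (zCount φ S : ℤ)|

/-- Extension of a partition given on `X` to all of ℕ (junk value elsewhere). -/
def extPart {h : ℕ} (hh : 0 < h) (X : Finset ℕ) (e : {x // x ∈ X} → Fin h ⊕ Fin h) :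
    ℕ → Fin h ⊕ Fin h := fun x =>
  if hx : x ∈ X then e ⟨x, hx⟩ else Sum.inl ⟨0, hh⟩

/-- Probability of an event under the uniform distribution on a finite type. -/
def unifProb {Ω : Type*} [Fintype Ω] (p : Ω → Prop) : ℝ :=
  haveI := Classical.decPred p
  ((Finset.univ.filter p).card : ℝ) / (Fintype.card Ω : ℝ)

/-- The (1,1) entry of the product `M 0 * M 1 * ⋯ * M (n-1)`. -/
def mprodVal {K : Type*} [CommSemiring K] {n w : ℕ} (hw : 0 < w)
    (M : Fin n → Matrix (Fin w) (Fin w) (MvPolynomial ℕ K)) : MvPolynomial ℕ K :=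
  (List.ofFn M).prod ⟨0, hw⟩ ⟨0, hw⟩

/-- An oblivious read-once ABP of width `w` in variables `x_1, …, x_N` with
variable order π (a permutation of `{1, …, N}`): the ℓ-th layer matrix has
entries of degree at most 1 in the single variable `x_{π(ℓ)}`. -/
def IsROABP {K : Type*} [CommSemiring K] (N w : ℕ) (π : ℕ → ℕ)
    (M : Fin N → Matrix (Fin w) (Fin w) (MvPolynomial ℕ K)) : Prop :=
  Set.BijOn π (Set.Icc 1 N) (Set.Icc 1 N) ∧
    ∀ ℓ : Fin N, ∀ i j, ∃ a b : K, M ℓ i j = C a + C b * X (π (ℓ.val + 1))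

/-- An `r`-pass syntactically multilinear ABP of width `w`. -/
def IsRPass {K : Type*} [CommSemiring K] (N w r : ℕ) (π : Fin r → ℕ → ℕ)
    (M : Fin (r * N) → Matrix (Fin w) (Fin w) (MvPolynomial ℕ K)) : Prop :=
  (∀ j, Set.BijOn (π j) (Set.Icc 1 N) (Set.Icc 1 N)) ∧
  (∀ ℓ : Fin (r * N), ∀ i j, ∃ a b : K,
      M ℓ i j = C a + C b *
        X (π ⟨ℓ.val / N, Nat.div_lt_of_lt_mul (by rw [Nat.mul_comm N r]; exact ℓ.2)⟩
            (ℓ.val % N + 1))) ∧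
  (∀ (idx : Fin (r * N + 1) → Fin w) (v : ℕ) (ℓ₁ ℓ₂ : Fin (r * N)),
      v ∈ (M ℓ₁ (idx ℓ₁.castSucc) (idx ℓ₁.succ)).vars →
      v ∈ (M ℓ₂ (idx ℓ₂.castSucc) (idx ℓ₂.succ)).vars → ℓ₁ = ℓ₂)

/-- An α-sparse ROABP with variable blocks `Xs 0, …, Xs (d-1)`, width `w` and
sparsity `t`: every entry of the `i`-th matrix is a multilinear polynomial in the
variables `Xs i` with at most `t` monomials. -/
def IsSparseROABP {K : Type*} [CommSemiring K] {d : ℕ} (w t : ℕ)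
    (Xs : Fin d → Finset ℕ) (M : Fin d → Matrix (Fin w) (Fin w) (MvPolynomial ℕ K)) : Prop :=
  ∀ ℓ i j, MLin (M ℓ i j) ∧ (M ℓ i j).vars ⊆ Xs ℓ ∧ (M ℓ i j).support.card ≤ t

/-! Cutting the matrix product after `t` layers writes `f` as a sum of `w` products of polynomials
in disjoint sets of variables. A product `p * q` in which `p` uses `a` of the `y`-variables and `b`
of the `z`-variables has partial derivative matrix of rank at most `2 ^ (h - |a - b|)`, where
`h = N / 2`. So `f` has small rank as soon as some prefix of the variable order is unbalanced by
more than `β`.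

Read along the variable order, a random partition is a uniformly random balanced sequence of signs.
Forgetting the balance condition costs only a factor `N`, and a simple random walk stays in
`[-β, β]` for `N` steps with probability at most `2 exp (-N / (2 (β + 1)²))`. The theorem is the
case `β = N ^ (1 / 5) / 2`, where `N / β²` is of order `N ^ (3 / 5)`, well above `√N log N`. -/

section PartialDerivativeMatrix

variable {σ R : Type*} [CommSemiring R]

theorem filter_mem_eq_self_of_mem_supported {s : Set σ} [DecidablePred (· ∈ s)]
    {p : MvPolynomial σ R} (hp : p ∈ supported R s) {m : σ →₀ ℕ} (hm : coeff m p ≠ 0) :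
    m.filter (· ∈ s) = m := by
  rw [Finsupp.filter_eq_self_iff]
  intro i hi
  exact mem_supported.1 hp
    ((mem_vars_iff_mem_support i).2 ⟨m, mem_support_iff.2 hm, Finsupp.mem_support_iff.2 hi⟩)

theorem coeff_mul_of_mem_supported_compl {s : Set σ} [DecidablePred (· ∈ s)]
    {p q : MvPolynomial σ R} (hp : p ∈ supported R s) (hq : q ∈ supported R sᶜ) (m : σ →₀ ℕ) :
    coeff m (p * q) = coeff (m.filter (· ∈ s)) p * coeff (m.filter (· ∉ s)) q := by
  classical
  rw [coeff_mul]
  refine Finset.sum_eq_single (m.filter (· ∈ s), m.filter (· ∉ s)) ?_ ?_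
  · rintro ⟨a, b⟩ hab hne
    obtain rfl : a + b = m := Finset.HasAntidiagonal.mem_antidiagonal.1 hab
    by_contra hcoeff
    have ha : a.filter (· ∈ s) = a :=
      filter_mem_eq_self_of_mem_supported hp (left_ne_zero_of_mul hcoeff)
    have hb : b.filter (· ∉ s) = b :=
      filter_mem_eq_self_of_mem_supported hq (right_ne_zero_of_mul hcoeff)
    have ha' : a.filter (· ∉ s) = 0 := by
      simpa only [ha, add_eq_left] using Finsupp.filter_add_filter_not a (· ∈ s)
    have hb' : b.filter (· ∈ s) = 0 := by
      simpa only [hb, add_eq_right] using Finsupp.filter_add_filter_not b (· ∈ s)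
    exact hne (by simp only [Finsupp.filter_add, ha, hb, ha', hb', add_zero, zero_add])
  · intro hmem
    exact absurd (Finset.HasAntidiagonal.mem_antidiagonal.2
      (Finsupp.filter_add_filter_not m (· ∈ s))) hmem

/-- The exponent vector of the squarefree monomial `∏ i ∈ u, X i`. -/
def squarefreeExponent (u : Finset σ) : σ →₀ ℕ := ∑ i ∈ u, Finsupp.single i 1

theorem filter_squarefreeExponent (u : Finset σ) (P : σ → Prop) [DecidablePred P] :
    (squarefreeExponent u).filter P = squarefreeExponent (u.filter P) := by
  simp only [squarefreeExponent, Finsupp.filter_sum, Finset.sum_filter]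
  refine Finset.sum_congr rfl fun i _ => ?_
  split_ifs with hi
  · exact Finsupp.filter_single_of_pos P hi
  · exact Finsupp.filter_single_of_neg P hi

theorem pdm_apply {h : ℕ} (f : MvPolynomial (Fin h ⊕ Fin h) R) (S T : Finset (Fin h)) :
    pdm f S T = coeff (squarefreeExponent (S.disjSum T)) f := by
  rw [pdm, squarefreeExponent, Finset.sum_disjSum]

theorem rank_le_of_apply_eq_sum_mul {α β γ δ ι : Type*} [Fintype β] [Fintype γ] [Fintype δ]
    [Fintype ι] [StrongRankCondition R] (F : Matrix α β R) (u : α → γ) (v : β → δ)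
    (p : ι → α → δ → R) (q : ι → γ → β → R)
    (hF : ∀ a b, F a b = ∑ k, p k a (v b) * q k (u a) b) :
    F.rank ≤ Fintype.card ι * (Fintype.card γ * Fintype.card δ) := by
  classical
  let A : Matrix α (ι × γ × δ) R := Matrix.of fun a x => if u a = x.2.1 then p x.1 a x.2.2 else 0
  let B : Matrix (ι × γ × δ) β R := Matrix.of fun x b => if v b = x.2.2 then q x.1 x.2.1 b else 0
  have hAB : F = A * B := by
    ext a b
    simp [A, B, Matrix.mul_apply, hF, Fintype.sum_prod_type]
  calc F.rank ≤ A.rank := hAB ▸ Matrix.rank_mul_le_left A B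
    _ ≤ Fintype.card (ι × γ × δ) := A.rank_le_card_width
    _ = Fintype.card ι * (Fintype.card γ * Fintype.card δ) := by simp only [Fintype.card_prod]

variable [StrongRankCondition R] {h : ℕ} {ι : Type*} [Fintype ι] {A : Finset (Fin h ⊕ Fin h)}
  {p q : ι → MvPolynomial (Fin h ⊕ Fin h) R}

theorem rank_pdm_sum_mul_le (hp : ∀ k, p k ∈ supported R (A : Set (Fin h ⊕ Fin h)))
    (hq : ∀ k, q k ∈ supported R (A : Set (Fin h ⊕ Fin h))ᶜ) :
    (pdm (∑ k, p k * q k)).rank ≤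
      Fintype.card ι * 2 ^ (Aᶜ.toLeft.card + A.toRight.card) := by
  have hcoeff (S T : Finset (Fin h)) : pdm (∑ k, p k * q k) S T =
      ∑ k, coeff (squarefreeExponent ((S ∩ A.toLeft).disjSum (T ∩ A.toRight))) (p k) *
        coeff (squarefreeExponent ((S ∩ Aᶜ.toLeft).disjSum (T ∩ Aᶜ.toRight))) (q k) := by
    rw [pdm_apply, coeff_sum]
    refine Finset.sum_congr rfl fun k _ => ?_
    rw [coeff_mul_of_mem_supported_compl (hp k) (hq k), filter_squarefreeExponent,
      filter_squarefreeExponent]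
    congr 3 <;> ext (i | i) <;> simp
  have hrank := rank_le_of_apply_eq_sum_mul (pdm (∑ k, p k * q k))
    (γ := Aᶜ.toLeft.powerset) (δ := A.toRight.powerset)
    (fun S => ⟨S ∩ Aᶜ.toLeft, Finset.mem_powerset.2 Finset.inter_subset_right⟩)
    (fun T => ⟨T ∩ A.toRight, Finset.mem_powerset.2 Finset.inter_subset_right⟩)
    (fun k S V => coeff (squarefreeExponent ((S ∩ A.toLeft).disjSum V.1)) (p k))
    (fun k U T => coeff (squarefreeExponent (U.1.disjSum (T ∩ Aᶜ.toRight))) (q k)) hcoeff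
  simpa only [Fintype.card_coe, Finset.card_powerset, ← pow_add] using hrank

/-- The sign of a variable under a partition: `1` for `Y`-variables, `-1` for `Z`-variables. -/
def partSign {α β : Type*} : α ⊕ β → ℤˣ := Sum.elim (fun _ => 1) (fun _ => -1)

theorem sum_partSign {α β : Type*} (A : Finset (α ⊕ β)) :
    ∑ x ∈ A, ((partSign x : ℤ) : ℝ) = A.toLeft.card - A.toRight.card := by
  rw [Finset.sum_sum_eq_sum_toLeft_add_sum_toRight]
  simp [partSign, sub_eq_add_neg]

theorem rank_pdm_sum_mul_le_two_rpow (hp : ∀ k, p k ∈ supported R (A : Set (Fin h ⊕ Fin h)))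
    (hq : ∀ k, q k ∈ supported R (A : Set (Fin h ⊕ Fin h))ᶜ) :
    ((pdm (∑ k, p k * q k)).rank : ℝ) ≤
      Fintype.card ι * 2 ^ ((h : ℝ) - |∑ x ∈ A, ((partSign x : ℤ) : ℝ)|) := by
  have hY : (A.toLeft.card : ℝ) + Aᶜ.toLeft.card = h := by
    rw [show Aᶜ.toLeft = A.toLeftᶜ by ext; simp]
    exact_mod_cast A.toLeft.card_add_card_compl.trans (Fintype.card_fin h)
  have hZ : (A.toRight.card : ℝ) + Aᶜ.toRight.card = h := by
    rw [show Aᶜ.toRight = A.toRightᶜ by ext; simp]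
    exact_mod_cast A.toRight.card_add_card_compl.trans (Fintype.card_fin h)
  have bound {n : ℕ} (hn : (n : ℝ) = h - |∑ x ∈ A, ((partSign x : ℤ) : ℝ)|)
      (hr : (pdm (∑ k, p k * q k)).rank ≤ Fintype.card ι * 2 ^ n) :
      ((pdm (∑ k, p k * q k)).rank : ℝ) ≤
        Fintype.card ι * 2 ^ ((h : ℝ) - |∑ x ∈ A, ((partSign x : ℤ) : ℝ)|) := by
    rw [← hn, Real.rpow_natCast]
    exact_mod_cast hr
  rw [sum_partSign] at bound ⊢
  rcases le_total (A.toRight.card : ℝ) A.toLeft.card with hle | hle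
  · refine bound ?_ (rank_pdm_sum_mul_le hp hq)
    rw [abs_of_nonneg (sub_nonneg.2 hle)]
    push_cast
    linarith
  · have hr := rank_pdm_sum_mul_le (A := Aᶜ) (p := q) (q := p) (by simpa using hq)
      (by simpa using hp)
    simp only [mul_comm (q _), compl_compl] at hr
    refine bound ?_ hr
    rw [abs_of_nonpos (sub_nonpos.2 hle)]
    push_cast
    linarith

end PartialDerivativeMatrix

section ReadOnceProduct

variable {R : Type*} [CommSemiring R]

theorem rename_mem_supported_image {σ τ : Type*} (f : σ → τ) {s : Set σ} {p : MvPolynomial σ R}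
    (hp : p ∈ supported R s) : rename f p ∈ supported R (f '' s) := by
  classical
  rw [mem_supported] at hp ⊢
  calc ((rename f p).vars : Set τ) ⊆ f '' p.vars := mod_cast vars_rename f p
    _ ⊆ f '' s := Set.image_mono hp

variable {n w : ℕ}

theorem rename_mprodVal {τ : Type*} (f : ℕ → τ) (hw : 0 < w)
    (M : Fin n → Matrix (Fin w) (Fin w) (MvPolynomial ℕ R)) :
    rename f (mprodVal hw M) =
      (List.ofFn fun l => (M l).map (rename f)).prod ⟨0, hw⟩ ⟨0, hw⟩ := by
  change (rename f : MvPolynomial ℕ R →ₐ[R] MvPolynomial τ R).mapMatrix (List.ofFn M).prod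
    ⟨0, hw⟩ ⟨0, hw⟩ = _
  rw [map_list_prod, List.map_ofFn]
  rfl

theorem list_prod_apply_mem_supported {σ : Type*} {s : Set σ}
    {L : List (Matrix (Fin w) (Fin w) (MvPolynomial σ R))}
    (hL : ∀ A ∈ L, ∀ i j, A i j ∈ supported R s) (i j : Fin w) : L.prod i j ∈ supported R s :=
  (supported R s).matrix.list_prod_mem (fun A hA => hL A hA) i j

variable [StrongRankCondition R] {h : ℕ}

theorem rank_pdm_list_prod_le (x : Fin n ≃ Fin h ⊕ Fin h)
    (L : Fin n → Matrix (Fin w) (Fin w) (MvPolynomial (Fin h ⊕ Fin h) R))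
    (hL : ∀ l i j, L l i j ∈ supported R {x l}) (i j : Fin w) (t : ℕ) :
    ((pdm ((List.ofFn L).prod i j)).rank : ℝ) ≤
      w * 2 ^ ((h : ℝ) - |∑ l : Fin n with l.val < t, ((partSign (x l) : ℤ) : ℝ)|) := by
  let A : Finset (Fin h ⊕ Fin h) :=
    (Finset.univ.filter fun l : Fin n => l.val < t).map x.toEmbedding
  have hleft (k) : ((List.ofFn L).take t).prod i k ∈ supported R (A : Set (Fin h ⊕ Fin h)) := by
    refine list_prod_apply_mem_supported (fun B hB => ?_) i k
    obtain ⟨l, hl, rfl⟩ := List.mem_take_iff_getElem.1 hB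
    rw [List.getElem_ofFn]
    refine fun i j => supported_mono (Set.singleton_subset_iff.2 ?_) (hL _ i j)
    simpa [A] using (lt_min_iff.1 hl).1
  have hright (k) : ((List.ofFn L).drop t).prod k j ∈ supported R (A : Set (Fin h ⊕ Fin h))ᶜ := by
    refine list_prod_apply_mem_supported (fun B hB => ?_) k j
    obtain ⟨l, hl, rfl⟩ := List.mem_drop_iff_getElem.1 hB
    rw [List.getElem_ofFn]
    refine fun i j => supported_mono (Set.singleton_subset_iff.2 ?_) (hL _ i j)
    simp [A]
  rw [← List.prod_take_mul_prod_drop (List.ofFn L) t, Matrix.mul_apply]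
  simpa only [Fintype.card_fin, A, Finset.sum_map, Equiv.coe_toEmbedding] using
    rank_pdm_sum_mul_le_two_rpow hleft hright

end ReadOnceProduct

section UniformProbability

variable {Ω Λ : Type*} [Fintype Ω] [Fintype Λ]

theorem unifProb_eq_natCard_div (p : Ω → Prop) :
    unifProb p = (Nat.card {ω // p ω} : ℝ) / Nat.card Ω := by
  classical
  rw [unifProb, Nat.card_eq_fintype_card, Nat.card_eq_fintype_card, Fintype.card_subtype]

theorem unifProb_nonneg (p : Ω → Prop) : 0 ≤ unifProb p := by
  rw [unifProb_eq_natCard_div]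
  positivity

theorem unifProb_le_one (p : Ω → Prop) : unifProb p ≤ 1 := by
  rw [unifProb_eq_natCard_div]
  exact div_le_one_of_le₀ (mod_cast Finite.card_subtype_le p) (Nat.cast_nonneg _)

theorem unifProb_mono {p q : Ω → Prop} (hpq : ∀ ω, p ω → q ω) : unifProb p ≤ unifProb q := by
  rw [unifProb_eq_natCard_div, unifProb_eq_natCard_div]
  gcongr
  exact Nat.card_le_card_of_injective _ (Subtype.map_injective hpq Function.injective_id)

theorem unifProb_not [Nonempty Ω] (p : Ω → Prop) :
    unifProb (fun ω => ¬ p ω) = 1 - unifProb p := by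
  classical
  have hcard : Nat.card {ω // p ω} + Nat.card {ω // ¬ p ω} = Nat.card Ω := by
    rw [← Nat.card_sum, Nat.card_congr (Equiv.sumCompl p)]
  rw [unifProb_eq_natCard_div, unifProb_eq_natCard_div, eq_sub_iff_add_eq, ← add_div,
    div_eq_one_iff_eq (Nat.cast_ne_zero.2 Nat.card_pos.ne')]
  exact_mod_cast (add_comm _ _).trans hcard

theorem unifProb_comp_equiv (E : Ω ≃ Λ) (p : Λ → Prop) :
    unifProb (fun ω => p (E ω)) = unifProb p := by
  rw [unifProb_eq_natCard_div, unifProb_eq_natCard_div, Nat.card_congr E,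
    Nat.card_congr (E.subtypeEquiv fun _ => Iff.rfl)]

theorem unifProb_comp_le {f : Ω → Λ} {m : ℕ} (hf : ∀ y, Nat.card {ω // f ω = y} ≤ m)
    (p : Λ → Prop) :
    unifProb (fun ω => p (f ω)) ≤ m * Nat.card Λ / Nat.card Ω * unifProb p := by
  classical
  rcases isEmpty_or_nonempty Λ with hΛ | hΛ
  · have := f.isEmpty
    simp [unifProb_eq_natCard_div]
  have hcard : Nat.card {ω // p (f ω)} ≤ m * Nat.card {y // p y} := by
    rw [← Nat.card_congr (Equiv.sigmaSubtypeFiberEquivSubtype f fun _ => Iff.rfl), Nat.card_sigma]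
    refine (Finset.sum_le_card_nsmul _ _ m fun y _ => hf y.1).trans_eq ?_
    rw [Finset.card_univ, Nat.card_eq_fintype_card, smul_eq_mul, mul_comm]
  have hΛ' : (Nat.card Λ : ℝ) ≠ 0 := Nat.cast_ne_zero.2 Nat.card_pos.ne'
  calc unifProb (fun ω => p (f ω)) ≤ m * Nat.card {y // p y} / Nat.card Ω := by
        rw [unifProb_eq_natCard_div]
        gcongr
        exact_mod_cast hcard
    _ = m * Nat.card Λ / Nat.card Ω * unifProb p := by
        rw [unifProb_eq_natCard_div]
        field_simp

theorem unifProb_fin_succ {γ : Type*} [Fintype γ] {n : ℕ} (p : (Fin (n + 1) → γ) → Prop) :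
    unifProb p = (∑ a, unifProb fun s : Fin n → γ => p (Fin.cons a s)) / Fintype.card γ := by
  have hcard : Nat.card {s // p s} = ∑ a, Nat.card {s : Fin n → γ // p (Fin.cons a s)} := by
    rw [← Nat.card_sigma]
    exact Nat.card_congr (((Fin.consEquiv fun _ => γ).subtypeEquiv fun _ => Iff.rfl).symm.trans
      (Equiv.subtypeProdEquivSigmaSubtype fun a s => p (Fin.cons a s)))
  simp only [unifProb_eq_natCard_div, ← Finset.sum_div, hcard, Nat.card_eq_fintype_card (α := γ),
    Nat.card_fun, Nat.card_fin]
  push_cast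
  rw [div_div, pow_succ]

end UniformProbability

section BalancedSigns

theorem natCard_equiv_comp_eq_le {α β γ : Type*} [Fintype β] [Fintype γ]
    [DecidableEq γ] (f : β → γ) (s : α → γ) :
    Nat.card {e : α ≃ β // f ∘ e = s} ≤ ∏ c, (Fintype.card {b // f b = c}).factorial := by
  classical
  rcases isEmpty_or_nonempty {e : α ≃ β // f ∘ e = s} with hempty | ⟨e₀, he₀⟩
  · simp
  rw [← DomMulAct.stabilizer_card, ← Nat.card_eq_fintype_card]
  refine Nat.card_le_card_of_injective
    (fun e => ⟨e₀.symm.trans e.1, ?_⟩) fun e e' hee => Subtype.ext ?_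
  · rw [Equiv.coe_trans, ← Function.comp_assoc, e.2, ← he₀, Function.comp_assoc,
      Equiv.self_comp_symm, Function.comp_id]
  · simpa [Equiv.ext_iff, e₀.symm.surjective.forall] using congrArg Subtype.val hee

theorem natCard_equiv_partSign_comp_eq_le {α : Type*} {h : ℕ} (s : α → ℤˣ) :
    Nat.card {e : α ≃ Fin h ⊕ Fin h // partSign ∘ e = s} ≤ h.factorial * h.factorial := by
  refine (natCard_equiv_comp_eq_le partSign s).trans_eq ?_
  have hY : Fintype.card {x : Fin h ⊕ Fin h // partSign x = 1} = h := by
    rw [Fintype.card_subtype, Finset.card_filter, Fintype.sum_sum_type]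
    simp [partSign]
  have hZ : Fintype.card {x : Fin h ⊕ Fin h // partSign x = -1} = h := by
    rw [Fintype.card_subtype, Finset.card_filter, Fintype.sum_sum_type]
    simp [partSign]
  rw [UnitsInt.univ, Finset.prod_pair (by decide), hY, hZ]

theorem factorial_mul_factorial_mul_two_pow_le {h : ℕ} (hh : 0 < h) :
    h.factorial * h.factorial * 2 ^ (2 * h) ≤ 2 * h * (2 * h).factorial := by
  have hbinom : h.centralBinom * (h.factorial * h.factorial) = (2 * h).factorial := by
    rw [Nat.centralBinom_eq_two_mul_choose, two_mul, ← mul_assoc,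
      Nat.add_choose_mul_factorial_mul_factorial]
  calc h.factorial * h.factorial * 2 ^ (2 * h) = h.factorial * h.factorial * 4 ^ h := by
        rw [pow_mul, show 2 ^ 2 = 4 from rfl]
    _ ≤ h.factorial * h.factorial * (2 * h * h.centralBinom) := by
        gcongr
        exact Nat.four_pow_le_two_mul_self_mul_centralBinom h hh
    _ = 2 * h * (2 * h).factorial := by rw [← hbinom]; ring

theorem unifProb_partSign_comp_le {α : Type*} [Fintype α] [DecidableEq α] {h : ℕ} (hh : 0 < h)
    (hα : Fintype.card α = 2 * h) (p : (α → ℤˣ) → Prop) :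
    unifProb (fun e : α ≃ Fin h ⊕ Fin h => p (partSign ∘ e)) ≤ (2 * h : ℕ) * unifProb p := by
  have e₀ : α ≃ Fin h ⊕ Fin h := Fintype.equivOfCardEq (by simp [hα, two_mul])
  refine (unifProb_comp_le natCard_equiv_partSign_comp_eq_le p).trans
    (mul_le_mul_of_nonneg_right ?_ (unifProb_nonneg p))
  rw [Nat.card_eq_fintype_card, Nat.card_eq_fintype_card, Fintype.card_fun, Fintype.card_units_int,
    Fintype.card_equiv e₀, hα, div_le_iff₀ (by positivity)]
  exact_mod_cast factorial_mul_factorial_mul_two_pow_le hh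

end BalancedSigns

section RandomWalk

/-- The `±1`-walk with start `x` and steps `s` never leaves `[-β, β]`. Times `t > n` are allowed
but contribute nothing new, the walk having stopped at time `n`. -/
def StaysWithin (β x : ℝ) {n : ℕ} (s : Fin n → ℤˣ) : Prop :=
  ∀ t : ℕ, |x + ∑ l : Fin n with l.val < t, ((s l : ℤ) : ℝ)| ≤ β

theorem staysWithin_cons {β x : ℝ} {n : ℕ} (a : ℤˣ) (s : Fin n → ℤˣ) :
    StaysWithin β x (Fin.cons a s : Fin (n + 1) → ℤˣ) ↔
      |x| ≤ β ∧ StaysWithin β (x + (a : ℤ)) s := by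
  have hsum (t : ℕ) : ∑ l : Fin (n + 1) with l.val < t + 1,
      (((Fin.cons a s : Fin (n + 1) → ℤˣ) l : ℤ) : ℝ) =
        (a : ℤ) + ∑ l : Fin n with l.val < t, ((s l : ℤ) : ℝ) := by
    simp only [Finset.sum_filter, Fin.sum_univ_succ, Fin.cons_zero, Fin.cons_succ, Fin.val_zero,
      Fin.val_succ, Nat.zero_lt_succ, if_true, add_lt_add_iff_right]
  rw [StaysWithin, Nat.and_forall_add_one.symm]
  simp only [hsum, ← add_assoc, Nat.not_lt_zero, Finset.filter_false, Finset.sum_empty, add_zero,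
    StaysWithin]

/-- The potential `2 (β + 1)² - x²` lies between `(β + 1)²` and `2 (β + 1)²` wherever one step from
`[-β, β]` can lead, and its average over the two steps from `x` is smaller by `1` than its value
at `x`. -/
def walkPotential (β x : ℝ) : ℝ := 2 * (β + 1) ^ 2 - x ^ 2

/-- The factor by which the expected `walkPotential` shrinks in one step. -/
def walkDecay (β : ℝ) : ℝ := 1 - 1 / (2 * (β + 1) ^ 2)

variable {β : ℝ}

theorem walkDecay_nonneg (hβ : 0 ≤ β) : 0 ≤ walkDecay β := by
  rw [walkDecay, sub_nonneg, div_le_one (by positivity)]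
  nlinarith

theorem sq_le_walkPotential {x : ℝ} (hx : |x| ≤ β + 1) : (β + 1) ^ 2 ≤ walkPotential β x := by
  rw [walkPotential]
  linarith [sq_le_sq.2 (hx.trans (le_abs_self _))]

theorem walkPotential_average_le (hβ : 0 ≤ β) (x : ℝ) :
    (walkPotential β (x + 1) + walkPotential β (x - 1)) / 2 ≤
      walkDecay β * walkPotential β x := by
  have hdecay : walkDecay β * walkPotential β x =
      (walkPotential β (x + 1) + walkPotential β (x - 1)) / 2 + x ^ 2 / (2 * (β + 1) ^ 2) := by
    simp only [walkDecay, walkPotential]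
    field_simp
    ring
  rw [hdecay]
  exact le_add_of_nonneg_right (by positivity)

theorem unifProb_staysWithin_succ {n : ℕ} {x : ℝ} (hx : |x| ≤ β) :
    unifProb (fun s : Fin (n + 1) → ℤˣ => StaysWithin β x s) =
      (unifProb (fun s : Fin n → ℤˣ => StaysWithin β (x + 1) s) +
        unifProb (fun s : Fin n → ℤˣ => StaysWithin β (x - 1) s)) / 2 := by
  rw [unifProb_fin_succ, UnitsInt.univ, Finset.sum_pair (by decide), Fintype.card_units_int]
  simp only [staysWithin_cons, hx, true_and, Units.val_one, Units.val_neg, Int.cast_one,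
    Int.cast_neg, ← sub_eq_add_neg, Nat.cast_ofNat]

theorem unifProb_staysWithin_eq_zero {n : ℕ} {x : ℝ} (hx : β < |x|) :
    unifProb (fun s : Fin n → ℤˣ => StaysWithin β x s) = 0 := by
  have hempty (s : Fin n → ℤˣ) : ¬ StaysWithin β x s := fun hs => hx.not_ge (by simpa using hs 0)
  simp [unifProb_eq_natCard_div, hempty]

theorem sq_mul_unifProb_staysWithin_le (hβ : 0 ≤ β) (n : ℕ) {x : ℝ} (hx : |x| ≤ β + 1) :
    (β + 1) ^ 2 * unifProb (fun s : Fin n → ℤˣ => StaysWithin β x s) ≤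
      walkDecay β ^ n * walkPotential β x := by
  have hρ : 0 ≤ walkDecay β := walkDecay_nonneg hβ
  induction n generalizing x with
  | zero =>
    rw [pow_zero, one_mul]
    exact (mul_le_of_le_one_right (sq_nonneg _) (unifProb_le_one _)).trans (sq_le_walkPotential hx)
  | succ n ih =>
    rcases le_or_gt |x| β with hxβ | hxβ
    · have hup := ih (x := x + 1) <| (abs_add_le x 1).trans <| by rw [abs_one]; gcongr
      have hdown := ih (x := x - 1) <| (abs_sub x 1).trans <| by rw [abs_one]; gcongr
      rw [unifProb_staysWithin_succ hxβ]
      calc _ ≤ walkDecay β ^ n *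
            ((walkPotential β (x + 1) + walkPotential β (x - 1)) / 2) := by linarith
        _ ≤ walkDecay β ^ n * (walkDecay β * walkPotential β x) := by
            gcongr
            exact walkPotential_average_le hβ x
        _ = walkDecay β ^ (n + 1) * walkPotential β x := by rw [pow_succ, mul_assoc]
    · rw [unifProb_staysWithin_eq_zero hxβ, mul_zero]
      exact mul_nonneg (pow_nonneg hρ _) ((sq_nonneg _).trans (sq_le_walkPotential hx))

theorem unifProb_staysWithin_zero_le (hβ : 0 ≤ β) (n : ℕ) :
    unifProb (fun s : Fin n → ℤˣ => StaysWithin β 0 s) ≤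
      2 * Real.exp (-(n / (2 * (β + 1) ^ 2))) := by
  refine le_of_mul_le_mul_left ?_ (show 0 < (β + 1) ^ 2 by positivity)
  calc (β + 1) ^ 2 * unifProb (fun s : Fin n → ℤˣ => StaysWithin β 0 s)
      ≤ walkDecay β ^ n * walkPotential β 0 :=
        sq_mul_unifProb_staysWithin_le hβ n (by rw [abs_zero]; positivity)
    _ = (β + 1) ^ 2 * (2 * walkDecay β ^ n) := by rw [walkPotential]; ring
    _ ≤ (β + 1) ^ 2 * (2 * Real.exp (-(1 / (2 * (β + 1) ^ 2))) ^ n) := by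
        gcongr
        · exact walkDecay_nonneg hβ
        · exact Real.one_sub_le_exp_neg _
    _ = (β + 1) ^ 2 * (2 * Real.exp (-(n / (2 * (β + 1) ^ 2)))) := by
        rw [← Real.exp_nat_mul, mul_neg, mul_one_div]

end RandomWalk

section Asymptotics

theorem rpow_three_fifths_div_two_le {x : ℝ} (hx : 32 ≤ x) :
    x ^ ((3 : ℝ) / 5) / 2 ≤ x / (2 * (x ^ ((1 : ℝ) / 5) / 2 + 1) ^ 2) := by
  have hx0 : 0 < x := by linarith
  have htwo : 2 ≤ x ^ ((1 : ℝ) / 5) := by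
    calc (2 : ℝ) = 32 ^ ((1 : ℝ) / 5) := by
          rw [show (32 : ℝ) = 2 ^ (5 : ℝ) by norm_num, ← Real.rpow_mul (by norm_num)]
          norm_num
      _ ≤ x ^ ((1 : ℝ) / 5) := by gcongr
  rw [le_div_iff₀ (by positivity)]
  calc x ^ ((3 : ℝ) / 5) / 2 * (2 * (x ^ ((1 : ℝ) / 5) / 2 + 1) ^ 2)
      = x ^ ((3 : ℝ) / 5) * (x ^ ((1 : ℝ) / 5) / 2 + 1) ^ 2 := by ring
    _ ≤ x ^ ((3 : ℝ) / 5) * (x ^ ((1 : ℝ) / 5)) ^ 2 := by gcongr; linarith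
    _ = x := by
        rw [← Real.rpow_natCast, ← Real.rpow_mul hx0.le, ← Real.rpow_add hx0]
        norm_num

theorem eventually_mul_sqrt_mul_log_add_log_le {c : ℝ} (hc : 0 ≤ c) :
    ∀ᶠ x : ℝ in Filter.atTop, c * √x * Real.log x + Real.log (x * 2) ≤ x ^ ((3 : ℝ) / 5) / 2 := by
  filter_upwards [(isLittleO_log_rpow_atTop (r := 1 / 10) (by norm_num)).bound
    (show 0 < 1 / (2 * (c + 2)) by positivity), Filter.eventually_ge_atTop 2] with x hlog hx
  have hx0 : 0 < x := by linarith
  have hlog0 : 0 ≤ Real.log x := Real.log_nonneg (by linarith)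
  rw [Real.norm_of_nonneg hlog0, Real.norm_of_nonneg (by positivity)] at hlog
  have hlog_two : Real.log 2 ≤ Real.log x := Real.log_le_log (by norm_num) hx
  have hsqrt : 1 ≤ √x := Real.one_le_sqrt.2 (by linarith)
  calc c * √x * Real.log x + Real.log (x * 2) ≤ (c + 2) * (√x * Real.log x) := by
        rw [Real.log_mul hx0.ne' two_ne_zero]
        linarith [le_mul_of_one_le_left hlog0 hsqrt]
    _ ≤ (c + 2) * (√x * (1 / (2 * (c + 2)) * x ^ ((1 : ℝ) / 10))) := by gcongr
    _ = x ^ ((1 : ℝ) / 2) * x ^ ((1 : ℝ) / 10) / 2 := by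
        rw [← Real.sqrt_eq_rpow]
        field_simp
    _ = x ^ ((3 : ℝ) / 5) / 2 := by
        rw [← Real.rpow_add hx0]
        norm_num

theorem eventually_mul_two_mul_exp_le {c : ℝ} (hc : 0 ≤ c) :
    ∀ᶠ x : ℝ in Filter.atTop,
      x * (2 * Real.exp (-(x / (2 * (x ^ ((1 : ℝ) / 5) / 2 + 1) ^ 2)))) ≤
        2 ^ (-(c * √x * Real.logb 2 x)) := by
  filter_upwards [eventually_mul_sqrt_mul_log_add_log_le hc, Filter.eventually_ge_atTop 32]
    with x hlog hx
  have hx0 : 0 < x := by linarith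
  have hexp := hlog.trans (rpow_three_fifths_div_two_le hx)
  calc x * (2 * Real.exp (-(x / (2 * (x ^ ((1 : ℝ) / 5) / 2 + 1) ^ 2))))
      = Real.exp (Real.log (x * 2) - x / (2 * (x ^ ((1 : ℝ) / 5) / 2 + 1) ^ 2)) := by
        rw [sub_eq_add_neg, Real.exp_add, Real.exp_log (mul_pos hx0 two_pos), mul_assoc]
    _ ≤ Real.exp (-(c * √x * Real.log x)) := Real.exp_le_exp.2 (by linarith)
    _ = 2 ^ (-(c * √x * Real.logb 2 x)) := by
        rw [← Real.log_div_log, Real.rpow_def_of_pos two_pos]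
        field_simp

theorem le_rpow_logb_two {w x : ℝ} (hw : 1 ≤ w) (hx : 2 ≤ x) : w ≤ w ^ Real.logb 2 x := by
  refine Real.self_le_rpow_of_one_le hw ?_
  rwa [Real.le_logb_iff_rpow_le one_lt_two (by linarith), Real.rpow_one]

end Asymptotics

section ObliviousABP

theorem exists_equiv_coe_eq_of_bijOn {N : ℕ} {π : ℕ → ℕ}
    (hπ : Set.BijOn π (Set.Icc 1 N) (Set.Icc 1 N)) :
    ∃ σ : Fin N ≃ {x // x ∈ Finset.Icc 1 N}, ∀ l, (σ l : ℕ) = π (l.val + 1) := by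
  have hmem (l : Fin N) : l.val + 1 ∈ Set.Icc 1 N := ⟨Nat.le_add_left 1 _, l.isLt⟩
  refine ⟨Equiv.ofBijective (fun l => ⟨π (l.val + 1), Finset.mem_Icc.2 (hπ.mapsTo (hmem l))⟩) ?_,
    fun _ => rfl⟩
  refine (Fintype.bijective_iff_injective_and_card _).2 ⟨fun l l' hll => ?_, by simp⟩
  exact Fin.ext (Nat.succ_injective (hπ.injOn (hmem l) (hmem l') (congrArg Subtype.val hll)))

theorem extPart_coe {h : ℕ} (hh : 0 < h) {X : Finset ℕ} (e : {x // x ∈ X} → Fin h ⊕ Fin h)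
    (x : {x // x ∈ X}) : extPart hh X e x = e x :=
  dif_pos x.2

theorem IsROABP.mem_supported {K : Type*} [CommSemiring K] {N w : ℕ} {π : ℕ → ℕ}
    {M : Fin N → Matrix (Fin w) (Fin w) (MvPolynomial ℕ K)} (hM : IsROABP N w π M)
    (ℓ : Fin N) (i j : Fin w) : M ℓ i j ∈ supported K {π (ℓ.val + 1)} := by
  obtain ⟨a, b, hab⟩ := hM.2 ℓ i j
  rw [hab]
  have hX : (X (π (ℓ.val + 1)) : MvPolynomial ℕ K) ∈ supported K {π (ℓ.val + 1)} :=
    Algebra.subset_adjoin ⟨_, rfl, rfl⟩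
  exact add_mem (Subalgebra.algebraMap_mem _ a) (mul_mem (Subalgebra.algebraMap_mem _ b) hX)

variable {K : Type*} [CommSemiring K] [StrongRankCondition K] {N h w : ℕ} (hh : 0 < h)
  (hw : 0 < w) {M : Fin N → Matrix (Fin w) (Fin w) (MvPolynomial ℕ K)} {β : ℝ}

theorem rank_pdm_rename_mprodVal_le_of_not_staysWithin {σ : Fin N ≃ {x // x ∈ Finset.Icc 1 N}}
    (hM : ∀ l i j, M l i j ∈ supported K {(σ l : ℕ)})
    {e : {x // x ∈ Finset.Icc 1 N} ≃ Fin h ⊕ Fin h}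
    (he : ¬ StaysWithin β 0 (partSign ∘ σ.trans e)) :
    ((pdm (rename (extPart hh (Finset.Icc 1 N) fun x => e x) (mprodVal hw M))).rank : ℝ) ≤
      w * 2 ^ ((h : ℝ) - β) := by
  obtain ⟨t, ht⟩ := not_forall.1 he
  rw [not_le, zero_add] at ht
  have hlayer (l i j) : (M l).map (rename (extPart hh (Finset.Icc 1 N) fun x => e x)) i j ∈
      supported K {σ.trans e l} := by
    simpa only [Set.image_singleton, extPart_coe, Matrix.map_apply, Equiv.trans_apply] using
      rename_mem_supported_image (extPart hh (Finset.Icc 1 N) fun x => e x) (hM l i j)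
  rw [rename_mprodVal]
  refine (rank_pdm_list_prod_le (σ.trans e) _ hlayer ⟨0, hw⟩ ⟨0, hw⟩ t).trans ?_
  gcongr
  · exact one_le_two
  · exact ht.le

theorem one_sub_le_unifProb_rank_pdm_le (hN : N = 2 * h) {π : ℕ → ℕ}
    (hπ : Set.BijOn π (Set.Icc 1 N) (Set.Icc 1 N))
    (hM : ∀ l i j, M l i j ∈ supported K {π (l.val + 1)}) (hβ : 0 ≤ β) :
    1 - N * (2 * Real.exp (-(N / (2 * (β + 1) ^ 2)))) ≤
      unifProb (fun e : {x // x ∈ Finset.Icc 1 N} ≃ (Fin h ⊕ Fin h) =>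
        ((pdm (rename (extPart hh (Finset.Icc 1 N) (fun x => e x)) (mprodVal hw M))).rank : ℝ) ≤
          w * 2 ^ ((h : ℝ) - β)) := by
  obtain ⟨σ, hσ⟩ := exists_equiv_coe_eq_of_bijOn hπ
  simp only [← hσ] at hM
  have e₀ : {x // x ∈ Finset.Icc 1 N} ≃ Fin h ⊕ Fin h :=
    Fintype.equivOfCardEq (by simp [hN, two_mul])
  have : Nonempty ({x // x ∈ Finset.Icc 1 N} ≃ Fin h ⊕ Fin h) := ⟨e₀⟩
  have hstay : unifProb (fun e : {x // x ∈ Finset.Icc 1 N} ≃ Fin h ⊕ Fin h =>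
      StaysWithin β 0 (partSign ∘ σ.trans e)) ≤ N * (2 * Real.exp (-(N / (2 * (β + 1) ^ 2)))) :=
    calc unifProb (fun e : {x // x ∈ Finset.Icc 1 N} ≃ Fin h ⊕ Fin h =>
          StaysWithin β 0 (partSign ∘ σ.trans e))
        = unifProb (fun x : Fin N ≃ Fin h ⊕ Fin h => StaysWithin β 0 (partSign ∘ x)) :=
          unifProb_comp_equiv (σ.symm.equivCongr (Equiv.refl _))
            fun x : Fin N ≃ Fin h ⊕ Fin h => StaysWithin β 0 (partSign ∘ x)
      _ ≤ (2 * h : ℕ) * unifProb (fun s : Fin N → ℤˣ => StaysWithin β 0 s) :=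
          unifProb_partSign_comp_le hh ((Fintype.card_fin N).trans hN) _
      _ ≤ N * (2 * Real.exp (-(N / (2 * (β + 1) ^ 2)))) := by
          rw [← hN]
          gcongr
          exact unifProb_staysWithin_zero_le hβ N
  calc 1 - N * (2 * Real.exp (-(N / (2 * (β + 1) ^ 2))))
      ≤ unifProb (fun e : {x // x ∈ Finset.Icc 1 N} ≃ Fin h ⊕ Fin h =>
          ¬ StaysWithin β 0 (partSign ∘ σ.trans e)) := by
        rw [unifProb_not]
        gcongr
    _ ≤ _ := unifProb_mono fun e he =>
        rank_pdm_rename_mprodVal_le_of_not_staysWithin hh hw hM he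

end ObliviousABP

theorem roabp_rank_upper_bound_general {c : ℝ} (hc : 0 ≤ c) :
    ∃ N₀ : ℕ, ∀ (K : Type*) [CommSemiring K] [StrongRankCondition K] (N h : ℕ),
      N₀ ≤ N → N = 2 * h → ∀ (hh : 0 < h) (w : ℕ) (hw : 0 < w) (π : ℕ → ℕ)
        (M : Fin N → Matrix (Fin w) (Fin w) (MvPolynomial ℕ K)),
        Set.BijOn π (Set.Icc 1 N) (Set.Icc 1 N) →
        (∀ ℓ i j, M ℓ i j ∈ supported K {π (ℓ.val + 1)}) →
        1 - (2 : ℝ) ^ (-(c * Real.sqrt N * Real.logb 2 N)) ≤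
          unifProb (fun e : {x // x ∈ Finset.Icc 1 N} ≃ (Fin h ⊕ Fin h) =>
            ((pdm (rename (extPart hh (Finset.Icc 1 N) (fun x => e x))
              (mprodVal hw M))).rank : ℝ) ≤
                w * 2 ^ ((N : ℝ) / 2 - (N : ℝ) ^ ((1 : ℝ) / 5) / 2)) := by
  obtain ⟨N₀, hN₀⟩ := Filter.eventually_atTop.1
    (tendsto_natCast_atTop_atTop.eventually (eventually_mul_two_mul_exp_le hc))
  refine ⟨N₀, fun K _ _ N h hN hNh hh w hw π M hπ hM => ?_⟩
  have hhalf : (N : ℝ) / 2 = h := by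
    rw [hNh]
    push_cast
    ring
  rw [hhalf]
  exact (sub_le_sub_left (hN₀ N hN) 1).trans
    (one_sub_le_unifProb_rank_pdm_le hh hw hNh hπ hM (by positivity))

/-- With high probability under a random partition, the partial derivative matrix of a
polynomial computed by an ROABP has low rank. -/
theorem roabp_rank_upper_bound :
    ∃ c c' : ℝ, 0 < c ∧ 0 < c' ∧ ∃ N₀ : ℕ, ∀ (K : Type) [Field K] (N h : ℕ),
      N₀ ≤ N → N = 2 * h → ∀ (hh : 0 < h),
      ∀ (w : ℕ) (hw : 2 ≤ w) (π : ℕ → ℕ)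
        (M : Fin N → Matrix (Fin w) (Fin w) (MvPolynomial ℕ K)),
        IsROABP N w π M →
        1 - (2 : ℝ) ^ (-(c' * Real.sqrt N * Real.logb 2 N)) ≤
          unifProb (fun e : {x // x ∈ Finset.Icc 1 N} ≃ (Fin h ⊕ Fin h) =>
            (((pdm (rename (extPart hh (Finset.Icc 1 N) (fun x => e x))
                  (mprodVal (show 0 < w by omega) M))).rank : ℝ) ≤
              (w : ℝ) ^ (c * Real.logb 2 N) *
                2 ^ ((N : ℝ)/2 - (N : ℝ) ^ ((1 : ℝ)/5) / 2))) := by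
  obtain ⟨N₀, hN₀⟩ := roabp_rank_upper_bound_general zero_le_one
  refine ⟨1, 1, one_pos, one_pos, N₀, fun K _ N h hN hNh hh w hw π M hM => ?_⟩
  refine (hN₀ K N h hN hNh hh w (by omega) π M hM.1 hM.mem_supported).trans
    (unifProb_mono fun e he => he.trans ?_)
  gcongr
  rw [one_mul]
  exact le_rpow_logb_two (mod_cast one_le_two.trans hw) (mod_cast (by omega : 2 ≤ N))

end
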